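/- arXiv:2604.06574 — 9 statements merged into one kernel-verified Lean document; each statement's English description precedes it below -/
import Mathlib

section
/- Let n, m be positive integers, let Ω ∈ ℂ^{2n×2n} be Hermitian, let 𝒞 ∈ ℂ^{2m×2n} be arbitrary, let S ∈ ℂ^{m×m} be unitary, and set 𝒟 := the block-diagonal matrix diag(S, conj(S)) ∈ ℂ^{2m×2m}. Define 𝒜 := −i·J_n·Ω − (1/2)·𝒞^♭·𝒞 and ℬ := −𝒞^♭·𝒟. Then the physical realizability identity holds: 𝒜 + 𝒜^♭ + ℬ·ℬ^♭ = 0. -/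
open Matrix

noncomputable section

/-- The matrix `J_k = diag(I_k, -I_k)` over `ℂ`. -/
def Jc (k : Type*) [Fintype k] [DecidableEq k] : Matrix (k ⊕ k) (k ⊕ k) ℂ :=
  Matrix.fromBlocks 1 0 0 (-1)

/-- The `♭`-adjoint `X^♭ = J_r · Xᴴ · J_k` of a `2k × 2r` complex matrix. -/
def flatAdj {k r : Type*} [Fintype k] [Fintype r] [DecidableEq k] [DecidableEq r]
    (X : Matrix (k ⊕ k) (r ⊕ r) ℂ) : Matrix (r ⊕ r) (k ⊕ k) ℂ :=
  Jc r * Xᴴ * Jc k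

theorem Jc_mul_self (k : Type*) [Fintype k] [DecidableEq k] : Jc k * Jc k = 1 := by
  simp [Jc, Matrix.fromBlocks_multiply]

theorem Jc_conjT (k : Type*) [Fintype k] [DecidableEq k] : (Jc k)ᴴ = Jc k := by
  simp [Jc, Matrix.fromBlocks_conjTranspose]

theorem flatAdj_mul' {k r l : Type*} [Fintype k] [Fintype r] [Fintype l] [DecidableEq k]
    [DecidableEq r] [DecidableEq l]
    (X : Matrix (k ⊕ k) (r ⊕ r) ℂ) (Y : Matrix (r ⊕ r) (l ⊕ l) ℂ) :
    flatAdj (X * Y) = flatAdj Y * flatAdj X := by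
  have h : flatAdj Y * flatAdj X = Jc l * Yᴴ * (Jc r * Jc r) * Xᴴ * Jc k := by
    simp only [flatAdj, Matrix.mul_assoc]
  rw [h, Jc_mul_self]
  simp only [flatAdj, Matrix.conjTranspose_mul, Matrix.mul_assoc, Matrix.one_mul]

theorem flatAdj_flatAdj {k r : Type*} [Fintype k] [Fintype r] [DecidableEq k] [DecidableEq r]
    (X : Matrix (k ⊕ k) (r ⊕ r) ℂ) : flatAdj (flatAdj X) = X := by
  have h : flatAdj (flatAdj X) = (Jc k * Jc k) * X * (Jc r * Jc r) := by
    simp only [flatAdj, Matrix.conjTranspose_mul, Jc_conjT, Matrix.conjTranspose_conjTranspose,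
      Matrix.mul_assoc]
  rw [h, Jc_mul_self, Jc_mul_self, Matrix.one_mul, Matrix.mul_one]

theorem flatAdj_sub' {k r : Type*} [Fintype k] [Fintype r] [DecidableEq k] [DecidableEq r]
    (X Y : Matrix (k ⊕ k) (r ⊕ r) ℂ) : flatAdj (X - Y) = flatAdj X - flatAdj Y := by
  simp only [flatAdj, Matrix.conjTranspose_sub, Matrix.mul_sub, Matrix.sub_mul]

theorem flatAdj_neg' {k r : Type*} [Fintype k] [Fintype r] [DecidableEq k] [DecidableEq r]
    (X : Matrix (k ⊕ k) (r ⊕ r) ℂ) : flatAdj (-X) = -flatAdj X := by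
  simp only [flatAdj, Matrix.conjTranspose_neg, Matrix.mul_neg, Matrix.neg_mul]

theorem flatAdj_smul' {k r : Type*} [Fintype k] [Fintype r] [DecidableEq k] [DecidableEq r]
    (c : ℂ) (X : Matrix (k ⊕ k) (r ⊕ r) ℂ) : flatAdj (c • X) = star c • flatAdj X := by
  simp only [flatAdj, Matrix.conjTranspose_smul, Matrix.mul_smul, Matrix.smul_mul]

/-- for `Ω` Hermitian, `𝒞` arbitrary, `S` unitary,
`𝒟 = diag(S, conj S)`, `𝒜 = -i J_n Ω - (1/2) 𝒞^♭ 𝒞`, `ℬ = -𝒞^♭ 𝒟`, the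
physical realizability identity `𝒜 + 𝒜^♭ + ℬ ℬ^♭ = 0` holds. -/
theorem physical_realizability
    (n m : ℕ) (hn : 0 < n) (hm : 0 < m)
    (Ω : Matrix (Fin n ⊕ Fin n) (Fin n ⊕ Fin n) ℂ) (hΩ : Ω.IsHermitian)
    (𝒞 : Matrix (Fin m ⊕ Fin m) (Fin n ⊕ Fin n) ℂ)
    (S : Matrix (Fin m) (Fin m) ℂ) (hS : S ∈ Matrix.unitaryGroup (Fin m) ℂ)
    (𝒟 : Matrix (Fin m ⊕ Fin m) (Fin m ⊕ Fin m) ℂ)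
    (h𝒟 : 𝒟 = Matrix.fromBlocks S 0 0 (S.map (starRingEnd ℂ)))
    (𝒜 : Matrix (Fin n ⊕ Fin n) (Fin n ⊕ Fin n) ℂ)
    (h𝒜 : 𝒜 = (-Complex.I) • (Jc (Fin n) * Ω) - (1 / 2 : ℂ) • (flatAdj 𝒞 * 𝒞))
    (ℬ : Matrix (Fin n ⊕ Fin n) (Fin m ⊕ Fin m) ℂ)
    (hℬ : ℬ = -(flatAdj 𝒞 * 𝒟)) :
    𝒜 + flatAdj 𝒜 + ℬ * flatAdj ℬ = 0 := by
  have h1 : S * Sᴴ = 1 := Matrix.mem_unitaryGroup_iff.mp hS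
  have h2 : S.map (starRingEnd ℂ) * (S.map (starRingEnd ℂ))ᴴ = 1 := by
    have h3 : (S.map (starRingEnd ℂ))ᴴ = Sᴴ.map (starRingEnd ℂ) := by
      ext i j; simp
    rw [h3, ← Matrix.map_mul, h1]
    simp
  have hD : 𝒟 * flatAdj 𝒟 = 1 := by
    rw [h𝒟]
    simp only [flatAdj, Jc, Matrix.fromBlocks_conjTranspose, Matrix.fromBlocks_multiply]
    simp [h1, h2]
  have hB : ℬ * flatAdj ℬ = flatAdj 𝒞 * 𝒞 := by
    rw [hℬ, flatAdj_neg', flatAdj_mul', flatAdj_flatAdj, Matrix.neg_mul, Matrix.mul_neg, neg_neg, Matrix.mul_assoc,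
      ← Matrix.mul_assoc 𝒟, hD, Matrix.one_mul]
  have hO : flatAdj (Jc (Fin n) * Ω) = Jc (Fin n) * Ω := by
    simp only [flatAdj, Matrix.conjTranspose_mul, Jc_conjT, hΩ.eq, Matrix.mul_assoc, Jc_mul_self,
      Matrix.mul_one]
  have hA : flatAdj 𝒜 = Complex.I • (Jc (Fin n) * Ω) - (1 / 2 : ℂ) • (flatAdj 𝒞 * 𝒞) := by
    rw [h𝒜, flatAdj_sub', flatAdj_smul', flatAdj_smul', hO, flatAdj_mul', flatAdj_flatAdj]
    simp
  rw [hA, hB, h𝒜]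
  module
end
end

section
/- Let n, m be positive integers, let Ω ∈ ℂ^{n×n} be Hermitian, let C ∈ ℂ^{m×n}, and let S ∈ ℂ^{m×m} be unitary. Define for ω ∈ ℝ the passive transfer matrix Ξ(iω) := S − C·(iωI_n + iΩ + (1/2)C†C)^{−1}·C†·S. Then for every real ω such that the matrix iωI_n + iΩ + (1/2)C†C is invertible, Ξ(iω)† · Ξ(iω) = I_m; that is, the passive transfer matrix is unitary at every point of the imaginary axis where it is defined. -/
open Matrix

noncomputable section

/-- for `Ω` Hermitian, `C` arbitrary and `S` unitary, the passive
transfer matrix `Ξ(iω) = S - C (iω I + iΩ + (1/2) CᴴC)⁻¹ Cᴴ S` is unitary,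
`Ξ(iω)ᴴ Ξ(iω) = I`, at every real `ω` where the inverse exists. -/
theorem passive_transfer_unitary_on_imaginary_axis
    (n m : ℕ) (hn : 0 < n) (hm : 0 < m)
    (Ω : Matrix (Fin n) (Fin n) ℂ) (hΩ : Ω.IsHermitian)
    (C : Matrix (Fin m) (Fin n) ℂ)
    (S : Matrix (Fin m) (Fin m) ℂ) (hS : S ∈ Matrix.unitaryGroup (Fin m) ℂ) :
    ∀ ω : ℝ,
      IsUnit (((ω : ℂ) * Complex.I) • (1 : Matrix (Fin n) (Fin n) ℂ)
          + Complex.I • Ω + (1 / 2 : ℂ) • (Cᴴ * C)).det →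
      (S - C * (((ω : ℂ) * Complex.I) • (1 : Matrix (Fin n) (Fin n) ℂ)
            + Complex.I • Ω + (1 / 2 : ℂ) • (Cᴴ * C))⁻¹ * Cᴴ * S)ᴴ *
        (S - C * (((ω : ℂ) * Complex.I) • (1 : Matrix (Fin n) (Fin n) ℂ)
            + Complex.I • Ω + (1 / 2 : ℂ) • (Cᴴ * C))⁻¹ * Cᴴ * S) = 1 := by
  intro ω hA
  have hsum : (((ω : ℂ) * Complex.I) • (1 : Matrix (Fin n) (Fin n) ℂ)
          + Complex.I • Ω + (1 / 2 : ℂ) • (Cᴴ * C)) + (((ω : ℂ) * Complex.I) • (1 : Matrix (Fin n) (Fin n) ℂ)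
          + Complex.I • Ω + (1 / 2 : ℂ) • (Cᴴ * C))ᴴ = Cᴴ * C := by
    simp only [conjTranspose_add, conjTranspose_smul, conjTranspose_mul, conjTranspose_conjTranspose,
      conjTranspose_one, hΩ.eq]
    ext i j
    simp only [Matrix.add_apply, Matrix.smul_apply, smul_eq_mul]
    simp
    ring
  generalize (((ω : ℂ) * Complex.I) • (1 : Matrix (Fin n) (Fin n) ℂ)
          + Complex.I • Ω + (1 / 2 : ℂ) • (Cᴴ * C)) = A at hA hsum ⊢
  have hAB : A * A⁻¹ = 1 := Matrix.mul_nonsing_inv A hA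
  generalize A⁻¹ = B at hAB ⊢
  have hBA : Bᴴ * Aᴴ = 1 := by rw [← conjTranspose_mul, hAB, conjTranspose_one]
  have key : Bᴴ * (Cᴴ * C) * B = Bᴴ + B := by
    rw [← hsum, Matrix.mul_add, Matrix.add_mul, hBA, Matrix.mul_assoc, hAB]
    simp
  have hT : (1 - C * B * Cᴴ)ᴴ * (1 - C * B * Cᴴ) = 1 := by
    have h2 : C * Bᴴ * Cᴴ * (C * B * Cᴴ) = C * Bᴴ * Cᴴ + C * B * Cᴴ := by
      calc _ = C * (Bᴴ * (Cᴴ * C) * B) * Cᴴ := by simp only [Matrix.mul_assoc]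
        _ = _ := by rw [key, Matrix.mul_add, Matrix.add_mul]
    have h3 : (C * B * Cᴴ)ᴴ = C * Bᴴ * Cᴴ := by
      simp [conjTranspose_mul, Matrix.mul_assoc]
    rw [conjTranspose_sub, conjTranspose_one, h3, sub_mul, mul_sub, mul_sub, h2]
    simp
  have hSS : Sᴴ * S = 1 := Matrix.mem_unitaryGroup_iff'.mp hS
  have hX : S - C * B * Cᴴ * S = (1 - C * B * Cᴴ) * S := by rw [sub_mul, one_mul]
  rw [hX, conjTranspose_mul, Matrix.mul_assoc, ← Matrix.mul_assoc _ _ S, hT, Matrix.one_mul, hSS]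
end
end

section
/- Let n, m be positive integers, let Ω ∈ ℂ^{n×n} be Hermitian, let C ∈ ℂ^{m×n}, and let S ∈ ℂ^{m×m} be unitary. Define A := −iΩ − (1/2)C†C and B := −C†S. Then the pair (A, B) is stabilizable if and only if the pair (C, A) is detectable. Here (A, B) is stabilizable means: for every λ ∈ ℂ with Re λ ≥ 0 and every x ∈ ℂⁿ, if x†A = λ·x† and x†B = 0 then x = 0; and (C, A) is detectable means: for every λ ∈ ℂ with Re λ ≥ 0 and every x ∈ ℂⁿ, if A·x = λ·x and C·x = 0 then x = 0. -/
open Matrix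

noncomputable section

open scoped ComplexOrder in
lemma herm_real {n : ℕ} {Ω : Matrix (Fin n) (Fin n) ℂ} (hΩ : Ω.IsHermitian) {x : Fin n → ℂ}
    {ν : ℂ} (hx : x ≠ 0) (h : Ω *ᵥ x = ν • x) : star ν = ν := by
  have h1 : star x ᵥ* Ω = star ν • star x := by
    have := congrArg star h
    rwa [star_mulVec, hΩ.eq, star_smul] at this
  have h2 : star x ⬝ᵥ (Ω *ᵥ x) = (star x ᵥ* Ω) ⬝ᵥ x := dotProduct_mulVec _ _ _
  rw [h, h1, dotProduct_smul, smul_dotProduct, smul_eq_mul, smul_eq_mul] at h2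
  have h3 : star x ⬝ᵥ x ≠ 0 := by
    rwa [Ne, dotProduct_comm, dotProduct_self_star_eq_zero]
  exact (mul_right_cancel₀ h3 h2).symm

lemma herm_left_right {n : ℕ} {Ω : Matrix (Fin n) (Fin n) ℂ} (hΩ : Ω.IsHermitian)
    (x : Fin n → ℂ) (ν : ℂ) : star x ᵥ* Ω = ν • star x ↔ Ω *ᵥ x = ν • x := by
  by_cases hx : x = 0
  · simp [hx]
  constructor
  · intro h
    have h1 := congrArg star h
    rw [star_vecMul, hΩ.eq, star_smul, star_star] at h1
    have h2 := herm_real hΩ hx h1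
    rw [star_star] at h2
    rwa [← h2] at h1
  · intro h
    have h1 := congrArg star h
    rwa [star_mulVec, hΩ.eq, star_smul, herm_real hΩ hx h] at h1

lemma negI_smul_iff {n : ℕ} (y x : Fin n → ℂ) (l : ℂ) :
    (-Complex.I) • y = l • x ↔ y = (Complex.I * l) • x := by
  constructor
  · intro h
    rw [mul_smul, ← h, smul_smul]; simp
  · intro h
    rw [h, smul_smul, ← mul_assoc]; simp

/-- for `Ω` Hermitian, `S` unitary, `A = -iΩ - (1/2)CᴴC` and
`B = -Cᴴ S`, the pair `(A, B)` is stabilizable (in the PBH sense) if and only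
if the pair `(C, A)` is detectable (in the PBH sense). -/
theorem passive_stabilizable_iff_detectable
    (n m : ℕ) (hn : 0 < n) (hm : 0 < m)
    (Ω : Matrix (Fin n) (Fin n) ℂ) (hΩ : Ω.IsHermitian)
    (C : Matrix (Fin m) (Fin n) ℂ)
    (S : Matrix (Fin m) (Fin m) ℂ) (hS : S ∈ Matrix.unitaryGroup (Fin m) ℂ)
    (A : Matrix (Fin n) (Fin n) ℂ)
    (hA : A = (-Complex.I) • Ω - (1 / 2 : ℂ) • (Cᴴ * C))
    (B : Matrix (Fin n) (Fin m) ℂ) (hB : B = -(Cᴴ * S)) :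
    (∀ lam : ℂ, 0 ≤ lam.re → ∀ x : Fin n → ℂ,
        Matrix.vecMul (star x) A = lam • star x → Matrix.vecMul (star x) B = 0 → x = 0) ↔
    (∀ lam : ℂ, 0 ≤ lam.re → ∀ x : Fin n → ℂ,
        A.mulVec x = lam • x → C.mulVec x = 0 → x = 0) := by
  have hBC : ∀ x : Fin n → ℂ, star x ᵥ* B = 0 ↔ C *ᵥ x = 0 := by
    intro x
    rw [hB, vecMul_neg, neg_eq_zero, ← vecMul_vecMul, ← star_mulVec]
    constructor
    · intro h
      have h1 := congrArg (fun v => v ᵥ* star S) h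
      simp only [vecMul_vecMul, Matrix.mem_unitaryGroup_iff.1 hS, vecMul_one, zero_vecMul] at h1
      exact star_eq_zero.1 h1
    · intro h
      simp [h]
  have key : ∀ (l : ℂ) (x : Fin n → ℂ), C *ᵥ x = 0 →
      (star x ᵥ* A = l • star x ↔ A *ᵥ x = l • x) := by
    intro l x hC
    have e1 : A *ᵥ x = (-Complex.I) • (Ω *ᵥ x) := by
      rw [hA, sub_mulVec, smul_mulVec, smul_mulVec, ← mulVec_mulVec, hC]; simp
    have e2 : star x ᵥ* A = (-Complex.I) • (star x ᵥ* Ω) := by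
      rw [hA, vecMul_sub, vecMul_smul, vecMul_smul, ← vecMul_vecMul, ← star_mulVec, hC]; simp
    rw [e1, e2, negI_smul_iff, negI_smul_iff, herm_left_right hΩ]
  constructor
  · intro h l hl x hx hC
    exact h l hl x ((key l x hC).2 hx) ((hBC x).2 hC)
  · intro h l hl x hx hb
    have hC := (hBC x).1 hb
    exact h l hl x ((key l x hC).1 hx) hC
end
end

section
/- Let m, n be positive integers and let ℂ₀ ∈ ℝ^{2m×2n}. Consider the drift matrix A := −(1/2)·ℂ₀ᵀ·ℂ₀ of a passive linear quantum system written in the rotating frame in which the Hamiltonian contribution vanishes. Then: (a) A is Hurwitz (every eigenvalue of A, viewed as a complex matrix, has strictly negative real part) if and only if A is nonsingular; and (b) if m < n (fewer input field channels than system oscillators) then A is necessarily singular, so the system cannot be Hurwitz stable. -/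
open Matrix

noncomputable section

/-- for `ℂ₀ ∈ ℝ^{2m×2n}` and the drift matrix
`A = -(1/2) ℂ₀ᵀ ℂ₀` of a passive linear quantum system in the rotating frame:
(a) `A` is Hurwitz (all complex eigenvalues have negative real part) iff `A`
is nonsingular; (b) if `m < n` then `A` is singular. -/
theorem passive_hurwitz_iff_nonsingular
    (m n : ℕ) (hm : 0 < m) (hn : 0 < n)
    (C₀ : Matrix (Fin m ⊕ Fin m) (Fin n ⊕ Fin n) ℝ)
    (A : Matrix (Fin n ⊕ Fin n) (Fin n ⊕ Fin n) ℝ)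
    (hA : A = -((1 / 2 : ℝ) • (C₀ᵀ * C₀))) :
    ((∀ lam : ℂ,
        ((A.map (algebraMap ℝ ℂ)) - lam • (1 : Matrix (Fin n ⊕ Fin n) (Fin n ⊕ Fin n) ℂ)).det = 0 →
        lam.re < 0) ↔ A.det ≠ 0)
    ∧ (m < n → A.det = 0) := by
  have hdet : (A.map (algebraMap ℝ ℂ)).det = algebraMap ℝ ℂ A.det :=
    ((algebraMap ℝ ℂ).map_det A).symm
  refine ⟨⟨fun h h0 => ?_, fun h0 lam hl => ?_⟩, fun hmn => ?_⟩
  · have := h 0 (by rw [zero_smul, sub_zero, hdet, h0, map_zero])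
    simp at this
  · obtain ⟨v, hv, hvz⟩ := Matrix.exists_mulVec_eq_zero_iff.mpr hl
    rw [sub_mulVec, smul_mulVec, one_mulVec, sub_eq_zero] at hvz
    set D : Matrix (Fin m ⊕ Fin m) (Fin n ⊕ Fin n) ℂ := C₀.map (algebraMap ℝ ℂ) with hD
    have hAD : A.map (algebraMap ℝ ℂ) = -((1 / 2 : ℂ) • (Dᴴ * D)) := by
      subst hA
      ext i j
      simp [hD, Matrix.mul_apply]
    have hAv : A.map (algebraMap ℝ ℂ) *ᵥ v = -((1 / 2 : ℂ) • (Dᴴ *ᵥ (D *ᵥ v))) := by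
      rw [hAD, neg_mulVec, smul_mulVec, mulVec_mulVec]
    have hDv : D *ᵥ v ≠ 0 := by
      intro hz
      rw [hz, mulVec_zero, smul_zero, neg_zero] at hAv
      have := Matrix.exists_mulVec_eq_zero_iff.mp ⟨v, hv, hAv⟩
      rw [hdet] at this
      exact h0 (by simpa using this)
    have e : lam * (star v ⬝ᵥ v) = -((1 / 2 : ℂ) * (star (D *ᵥ v) ⬝ᵥ (D *ᵥ v))) := by
      have h1 := congrArg (fun w => star v ⬝ᵥ w) (hvz.symm.trans hAv)
      simp only [dotProduct_smul, dotProduct_neg, smul_eq_mul] at h1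
      rw [h1, star_mulVec, dotProduct_mulVec]
    open scoped ComplexOrder in
    have p1 : 0 < star v ⬝ᵥ v := dotProduct_star_self_pos_iff.mpr hv
    open scoped ComplexOrder in
    have p2 : 0 < star (D *ᵥ v) ⬝ᵥ (D *ᵥ v) := dotProduct_star_self_pos_iff.mpr hDv
    obtain ⟨p1r, p1i⟩ := Complex.pos_iff.mp p1
    obtain ⟨p2r, p2i⟩ := Complex.pos_iff.mp p2
    have er := congrArg Complex.re e
    rw [Complex.mul_re, ← p1i, Complex.neg_re, Complex.mul_re, ← p2i] at er
    norm_num at er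
    by_contra hc
    have := mul_nonneg (not_lt.mp hc) p1r.le
    linarith
  · by_contra h0
    have hu : IsUnit A := (Matrix.isUnit_iff_isUnit_det A).mpr (isUnit_iff_ne_zero.mpr h0)
    have hr := Matrix.rank_of_isUnit A hu
    have hA' : A = (-((1 / 2 : ℝ) • C₀ᵀ)) * C₀ := by
      rw [hA, Matrix.neg_mul, Matrix.smul_mul]
    have h1 : A.rank ≤ C₀.rank := by
      rw [hA']; exact Matrix.rank_mul_le_right _ _
    have h2 := Matrix.rank_le_card_height C₀
    simp at hr h2
    omega
end
end

section
/- Let n, k, l be positive integers and γ > 0. Let A_x, A_y ∈ ℝ^{2n×2n}, C₁ ∈ ℝ^{2k×2n}, C₂ ∈ ℝ^{2l×2n}, B₁ ∈ ℝ^{2n×2l}, B₂ ∈ ℝ^{2n×2k} satisfy A_y = −𝕁_nᵀ·A_xᵀ·𝕁_n, B₁·B₁ᵀ = 𝕁_nᵀ·C₂ᵀ·C₂·𝕁_n, and B₂·B₂ᵀ = 𝕁_nᵀ·C₁ᵀ·C₁·𝕁_n. If Y ∈ ℝ^{2n×2n} solves the algebraic Riccati equation A_y·Y + Y·A_yᵀ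 + Y·(C₁ᵀC₁ − γ²·C₂ᵀC₂)·Y = 0, then Ŷ := γ²·𝕁_nᵀ·Y·𝕁_n solves the algebraic Riccati equation −A_xᵀ·Ŷ − Ŷ·A_x + Ŷ·((1/γ²)·B₂B₂ᵀ − B₁B₁ᵀ)·Ŷ = 0. -/
open Matrix

noncomputable section

/-- The symplectic matrix `𝕁_k = [[0, I],[-I, 0]]` over `ℝ`. -/
def JJr (k : Type*) [Fintype k] [DecidableEq k] : Matrix (k ⊕ k) (k ⊕ k) ℝ :=
  Matrix.fromBlocks 0 1 (-1) 0

/-- if `A_y = -𝕁ᵀA_xᵀ𝕁`, `B₁B₁ᵀ = 𝕁ᵀC₂ᵀC₂𝕁`,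
`B₂B₂ᵀ = 𝕁ᵀC₁ᵀC₁𝕁` and `Y` solves
`A_y Y + Y A_yᵀ + Y (C₁ᵀC₁ - γ²C₂ᵀC₂) Y = 0`, then `Ŷ = γ² 𝕁ᵀ Y 𝕁` solves
`-A_xᵀŶ - ŶA_x + Ŷ((1/γ²)B₂B₂ᵀ - B₁B₁ᵀ)Ŷ = 0`. -/
theorem riccati_transform
    (n k l : ℕ) (hn : 0 < n) (hk : 0 < k) (hl : 0 < l) (γ : ℝ) (hγ : 0 < γ)
    (Ax Ay : Matrix (Fin n ⊕ Fin n) (Fin n ⊕ Fin n) ℝ)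
    (C₁ : Matrix (Fin k ⊕ Fin k) (Fin n ⊕ Fin n) ℝ)
    (C₂ : Matrix (Fin l ⊕ Fin l) (Fin n ⊕ Fin n) ℝ)
    (B₁ : Matrix (Fin n ⊕ Fin n) (Fin l ⊕ Fin l) ℝ)
    (B₂ : Matrix (Fin n ⊕ Fin n) (Fin k ⊕ Fin k) ℝ)
    (hAy : Ay = -((JJr (Fin n))ᵀ * Axᵀ * JJr (Fin n)))
    (hB₁ : B₁ * B₁ᵀ = (JJr (Fin n))ᵀ * (C₂ᵀ * C₂) * JJr (Fin n))
    (hB₂ : B₂ * B₂ᵀ = (JJr (Fin n))ᵀ * (C₁ᵀ * C₁) * JJr (Fin n))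
    (Y : Matrix (Fin n ⊕ Fin n) (Fin n ⊕ Fin n) ℝ)
    (hY : Ay * Y + Y * Ayᵀ + Y * (C₁ᵀ * C₁ - (γ ^ 2 : ℝ) • (C₂ᵀ * C₂)) * Y = 0)
    (Yhat : Matrix (Fin n ⊕ Fin n) (Fin n ⊕ Fin n) ℝ)
    (hYhat : Yhat = (γ ^ 2 : ℝ) • ((JJr (Fin n))ᵀ * Y * JJr (Fin n))) :
    -(Axᵀ * Yhat) - Yhat * Ax
      + Yhat * ((1 / γ ^ 2 : ℝ) • (B₂ * B₂ᵀ) - B₁ * B₁ᵀ) * Yhat = 0 := by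
  have hT : (JJr (Fin n))ᵀ = -JJr (Fin n) := by
    simp [JJr, Matrix.fromBlocks_transpose, Matrix.fromBlocks_neg]
  have hJ : JJr (Fin n) * JJr (Fin n) = -1 := by
    simp [JJr, Matrix.fromBlocks_multiply, ← Matrix.fromBlocks_one, Matrix.fromBlocks_neg]
  rw [hB₁, hB₂, hYhat]
  subst hAy
  simp only [Matrix.transpose_neg, Matrix.transpose_mul, Matrix.transpose_transpose] at hY
  rw [hT] at hY ⊢
  generalize JJr (Fin n) = J at *
  generalize C₁ᵀ * C₁ = M₁ at *
  generalize C₂ᵀ * C₂ = M₂ at *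
  generalize Axᵀ = At at *
  have hJ' : ∀ X : Matrix (Fin n ⊕ Fin n) (Fin n ⊕ Fin n) ℝ, J * (J * X) = -X := by
    intro X
    rw [← Matrix.mul_assoc, hJ, Matrix.neg_mul, Matrix.one_mul]
  have hg : γ ^ 2 ≠ 0 := by positivity
  have key := congrArg (fun X => (-γ ^ 2 : ℝ) • (J * X * J)) hY
  simp only [Matrix.mul_add, Matrix.add_mul, Matrix.mul_sub, Matrix.sub_mul, Matrix.neg_mul,
    Matrix.mul_neg, Matrix.mul_assoc, hJ', hJ, Matrix.mul_smul, Matrix.smul_mul, neg_neg,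
    Matrix.mul_one, Matrix.mul_zero, Matrix.zero_mul, smul_zero] at key ⊢
  generalize J * (Y * (J * Ax)) = P at *
  generalize At * (J * (Y * J)) = Q at *
  generalize J * (Y * (M₁ * (Y * J))) = R at *
  generalize J * (Y * (M₂ * (Y * J))) = S at *
  have h2 : γ ^ 2 * (1 / γ ^ 2) = 1 := by field_simp
  ext i j
  have k2 := congrFun (congrFun key i) j
  simp at k2 ⊢
  field_simp
  rcases k2 with h | h
  · exact absurd h hγ.ne'
  · linear_combination (-γ ^ 2) * h
end
end

section
/- Let A ∈ ℝ^{p×p}, B ∈ ℝ^{p×q}, C ∈ ℝ^{p×r}, and let γ > 0. Suppose S, T ∈ ℝ^{p×p} are symmetric and solve the Lyapunov equations −A·S − S·Aᵀ + B·Bᵀ = 0 and −A·T − T·Aᵀ + C·Cᵀ = 0, and suppose P := S − (1/γ²)·T is invertible. Then X := P^{−1} is symmetric and solves the algebraic Riccati equation Aᵀ·X + X·A + X·((1/γ²)·C·Cᵀ − B·Bᵀ)·X = 0. -/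
open Matrix

noncomputable section

/-- if symmetric `S, T` solve the Lyapunov equations
`-AS - SAᵀ + BBᵀ = 0` and `-AT - TAᵀ + CCᵀ = 0`, and `P = S - (1/γ²)T` is
invertible, then `X = P⁻¹` is symmetric and solves the algebraic Riccati
equation `AᵀX + XA + X((1/γ²)CCᵀ - BBᵀ)X = 0`. -/
theorem lyapunov_to_riccati
    (p q r : ℕ)
    (A : Matrix (Fin p) (Fin p) ℝ)
    (B : Matrix (Fin p) (Fin q) ℝ)
    (C : Matrix (Fin p) (Fin r) ℝ)
    (γ : ℝ) (hγ : 0 < γ)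
    (S T : Matrix (Fin p) (Fin p) ℝ)
    (hSsym : Sᵀ = S) (hTsym : Tᵀ = T)
    (hS : -(A * S) - S * Aᵀ + B * Bᵀ = 0)
    (hT : -(A * T) - T * Aᵀ + C * Cᵀ = 0)
    (P : Matrix (Fin p) (Fin p) ℝ)
    (hP : P = S - (1 / γ ^ 2 : ℝ) • T)
    (hPinv : IsUnit P.det) :
    (P⁻¹)ᵀ = P⁻¹ ∧
      Aᵀ * P⁻¹ + P⁻¹ * A + P⁻¹ * ((1 / γ ^ 2 : ℝ) • (C * Cᵀ) - B * Bᵀ) * P⁻¹ = 0 := by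
  have hb : B * Bᵀ = A * S + S * Aᵀ := by
    rw [← sub_eq_zero, ← hS]; abel
  have hc : C * Cᵀ = A * T + T * Aᵀ := by
    rw [← sub_eq_zero, ← hT]; abel
  have hm : (1 / γ ^ 2 : ℝ) • (C * Cᵀ) - B * Bᵀ = -(A * P) - P * Aᵀ := by
    rw [hb, hc, hP, Matrix.mul_sub, Matrix.sub_mul, Matrix.mul_smul, Matrix.smul_mul, smul_add]
    abel
  constructor
  · rw [Matrix.transpose_nonsing_inv, hP, Matrix.transpose_sub, Matrix.transpose_smul, hSsym, hTsym]
  · have h1 : P⁻¹ * (A * P) * P⁻¹ = P⁻¹ * A := by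
      rw [Matrix.mul_assoc, Matrix.mul_assoc, Matrix.mul_nonsing_inv _ hPinv, Matrix.mul_one]
    have h2 : P⁻¹ * (P * Aᵀ) * P⁻¹ = Aᵀ * P⁻¹ := by
      rw [← Matrix.mul_assoc, Matrix.nonsing_inv_mul _ hPinv, Matrix.one_mul]
    rw [hm, Matrix.mul_sub, Matrix.sub_mul, Matrix.mul_neg, Matrix.neg_mul, h1, h2]
    abel
end
end

section
/- Let n be a positive integer, γ > 0, let W ∈ ℝ^{2n×2n} be real orthogonal, and let P, Q ∈ ℝ^{n×n} be symmetric positive definite. Define 𝕏 := Wᵀ·[[0,0],[0,P^{−1}]]·W and 𝕐 := (1/γ²)·𝕁_n·Wᵀ·[[Q^{−1},0],[0,0]]·W·𝕁_nᵀ, and let Z := 𝕁_n·W·𝕁_nᵀ·Wᵀ with n×n-block decomposition Z = [[Z₁, Z₂],[Z₃, Z₁ᵀ]]. Then the spectral radius of 𝕏·𝕐 satisfies ρ(𝕏·𝕐) = (1/γ²)·ρ(Z₁ᵀ·P^{−1}·Z₁·Q^{−1}). -/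
open Matrix

noncomputable section

/-- The spectral radius of a real square matrix: the supremum of the moduli of
the eigenvalues of its complexification. -/
def specRadius {ι : Type*} [Fintype ι] [DecidableEq ι] (M : Matrix ι ι ℝ) : ℝ :=
  sSup {x : ℝ | ∃ μ : ℂ,
    ((M.map (algebraMap ℝ ℂ)) - μ • (1 : Matrix ι ι ℂ)).det = 0 ∧ x = ‖μ‖}

theorem sSup_insert_zero_aux (S : Set ℝ) (hS : ∀ x ∈ S, 0 ≤ x) : sSup (insert 0 S) = sSup S := by
  rcases S.eq_empty_or_nonempty with rfl | hne
  · simp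
  by_cases hb : BddAbove S
  · rw [csSup_insert hb hne]
    exact sup_eq_right.mpr (Real.sSup_nonneg hS)
  · rw [Real.sSup_of_not_bddAbove hb, Real.sSup_of_not_bddAbove]
    rwa [bddAbove_insert]

theorem det_aux {m k : Type*} [Fintype m] [DecidableEq m] [Fintype k] [DecidableEq k]
    (A : Matrix m k ℂ) (B : Matrix k m ℂ) (μ : ℂ) (hμ : μ ≠ 0)
    (h : (A * B - μ • (1 : Matrix m m ℂ)).det = 0) :
    (B * A - μ • (1 : Matrix k k ℂ)).det = 0 := by
  have e1 : A * B - μ • (1 : Matrix m m ℂ) = (-μ) • (1 - A * (μ⁻¹ • B)) := by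
    rw [smul_sub, Matrix.mul_smul, smul_smul]
    simp [hμ]
    abel
  have e2 : B * A - μ • (1 : Matrix k k ℂ) = (-μ) • (1 - (μ⁻¹ • B) * A) := by
    rw [smul_sub, Matrix.smul_mul, smul_smul]
    simp [hμ]
    abel
  rw [e1, det_smul, mul_eq_zero] at h
  rw [e2, det_smul, ← det_one_sub_mul_comm]
  rcases h with h | h
  · exact absurd h (pow_ne_zero _ (neg_ne_zero.mpr hμ))
  · rw [h, mul_zero]

theorem specRadius_mul_comm_aux {m k : Type*} [Fintype m] [DecidableEq m] [Fintype k]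
    [DecidableEq k] (A : Matrix m k ℝ) (B : Matrix k m ℝ) :
    specRadius (A * B) = specRadius (B * A) := by
  unfold specRadius
  rw [← sSup_insert_zero_aux, ← sSup_insert_zero_aux {x : ℝ | ∃ μ : ℂ,
    (((B * A).map (algebraMap ℝ ℂ)) - μ • (1 : Matrix k k ℂ)).det = 0 ∧ x = ‖μ‖}]
  · congr 1
    ext x
    simp only [Set.mem_insert_iff, Set.mem_ofPred_eq, Matrix.map_mul]
    constructor
    · rintro (h | ⟨μ, h, rfl⟩)
      · exact Or.inl h
      · by_cases hμ : μ = 0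
        · left; simp [hμ]
        · exact Or.inr ⟨μ, det_aux _ _ μ hμ h, rfl⟩
    · rintro (h | ⟨μ, h, rfl⟩)
      · exact Or.inl h
      · by_cases hμ : μ = 0
        · left; simp [hμ]
        · exact Or.inr ⟨μ, det_aux _ _ μ hμ h, rfl⟩
  · rintro x ⟨μ, -, rfl⟩; positivity
  · rintro x ⟨μ, -, rfl⟩; positivity

theorem specRadius_smul_aux {m : Type*} [Fintype m] [DecidableEq m] (c : ℝ) (hc : 0 < c)
    (M : Matrix m m ℝ) : specRadius (c • M) = c * specRadius M := by
  unfold specRadius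
  rw [← smul_eq_mul, ← Real.sSup_smul_of_nonneg hc.le]
  congr 1
  have hc' : (c : ℂ) ≠ 0 := by exact_mod_cast hc.ne'
  have key : ∀ μ : ℂ, ((c • M).map (algebraMap ℝ ℂ) - ((c : ℂ) * μ) • (1 : Matrix m m ℂ)).det
      = (c : ℂ) ^ Fintype.card m * (M.map (algebraMap ℝ ℂ) - μ • (1 : Matrix m m ℂ)).det := by
    intro μ
    rw [← det_smul]
    congr 1
    ext i j
    simp [mul_sub, mul_assoc]
  ext x
  rw [Set.mem_smul_set]
  constructor
  · rintro ⟨μ, h, rfl⟩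
    refine ⟨‖(c : ℂ)⁻¹ * μ‖, ⟨(c : ℂ)⁻¹ * μ, ?_, rfl⟩, ?_⟩
    · have := key ((c : ℂ)⁻¹ * μ)
      rw [mul_inv_cancel_left₀ hc', h] at this
      exact (mul_eq_zero.mp this.symm).resolve_left (pow_ne_zero _ hc')
    · simp [abs_of_pos hc, hc.ne']
  · rintro ⟨y, ⟨μ, h, rfl⟩, rfl⟩
    refine ⟨(c : ℂ) * μ, ?_, ?_⟩
    · rw [key, h, mul_zero]
    · simp [abs_of_pos hc]

/-- with `W` real orthogonal, `P, Q` symmetric positive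
definite, `𝕏 = Wᵀ diag(0, P⁻¹) W`, `𝕐 = (1/γ²) 𝕁 Wᵀ diag(Q⁻¹, 0) W 𝕁ᵀ` and
`Z = 𝕁 W 𝕁ᵀ Wᵀ = [[Z₁, Z₂],[Z₃, Z₁ᵀ]]`, the spectral radius satisfies
`ρ(𝕏𝕐) = (1/γ²) ρ(Z₁ᵀ P⁻¹ Z₁ Q⁻¹)`. -/
theorem spectral_radius_XY
    (n : ℕ) (hn : 0 < n) (γ : ℝ) (hγ : 0 < γ)
    (W : Matrix (Fin n ⊕ Fin n) (Fin n ⊕ Fin n) ℝ)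
    (hW : W * Wᵀ = 1 ∧ Wᵀ * W = 1)
    (P Q : Matrix (Fin n) (Fin n) ℝ) (hP : P.PosDef) (hQ : Q.PosDef)
    (X : Matrix (Fin n ⊕ Fin n) (Fin n ⊕ Fin n) ℝ)
    (hX : X = Wᵀ * Matrix.fromBlocks 0 0 0 P⁻¹ * W)
    (Y : Matrix (Fin n ⊕ Fin n) (Fin n ⊕ Fin n) ℝ)
    (hY : Y = (1 / γ ^ 2 : ℝ) •
      (JJr (Fin n) * Wᵀ * Matrix.fromBlocks Q⁻¹ 0 0 0 * W * (JJr (Fin n))ᵀ))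
    (Z : Matrix (Fin n ⊕ Fin n) (Fin n ⊕ Fin n) ℝ)
    (hZ : Z = JJr (Fin n) * W * (JJr (Fin n))ᵀ * Wᵀ) :
    specRadius (X * Y) =
      (1 / γ ^ 2) * specRadius ((Z.toBlocks₁₁)ᵀ * P⁻¹ * Z.toBlocks₁₁ * Q⁻¹) := by
  obtain ⟨hW1, hW2⟩ := hW
  have hc : (0 : ℝ) < 1 / γ ^ 2 := by positivity
  generalize hpp : P⁻¹ = p at *
  generalize hqq : Q⁻¹ = q at *
  generalize 1 / γ ^ 2 = c at *
  obtain ⟨L, hL⟩ : ∃ L, L = W * (JJr (Fin n))ᵀ * Wᵀ := ⟨_, rfl⟩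
  have hJ : (JJr (Fin n))ᵀ = - JJr (Fin n) := by
    simp [JJr, fromBlocks_transpose, fromBlocks_neg]
  have hLt : W * JJr (Fin n) * Wᵀ = Lᵀ := by
    rw [hL]; simp [Matrix.mul_assoc]
  have hLs : Lᵀ = - L := by
    rw [← hLt, hL, hJ]; simp
  have hZ' : Z = JJr (Fin n) * L := by rw [hZ, hL]; simp only [Matrix.mul_assoc]
  have hXY : X * Y = c • (Wᵀ * (fromBlocks 0 0 0 p * (Lᵀ * (fromBlocks q 0 0 0 *
      (W * (JJr (Fin n))ᵀ))))) := by
    rw [hX, hY, ← hLt]; simp only [Matrix.mul_smul, Matrix.mul_assoc]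
  have hcyc : fromBlocks 0 0 0 p * (Lᵀ * (fromBlocks q 0 0 0 * (W * (JJr (Fin n))ᵀ))) * Wᵀ
      = fromBlocks 0 0 0 p * Lᵀ * fromBlocks q 0 0 0 * L := by
    rw [hL]; simp only [Matrix.mul_assoc]
  rw [hXY, specRadius_smul_aux c hc, specRadius_mul_comm_aux, hcyc]
  congr 1
  clear hcyc hXY hX hY hL hLt hZ
  subst hZ'
  obtain ⟨a, b, d, e, rfl⟩ : ∃ a b d e, L = fromBlocks a b d e :=
    ⟨_, _, _, _, (fromBlocks_toBlocks L).symm⟩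
  rw [fromBlocks_transpose, fromBlocks_neg, fromBlocks_inj] at hLs
  obtain ⟨-, hd, hb, -⟩ := hLs
  have hd' : bᵀ = -d := by rw [← hb]
  have hbd : b = -dᵀ := by rw [hd, neg_neg]
  have h1 : (JJr (Fin n) * fromBlocks a b d e).toBlocks₁₁ = d := by
    simp [JJr, fromBlocks_multiply]
  obtain ⟨E, hE⟩ : ∃ E : Matrix (Fin n ⊕ Fin n) (Fin n) ℝ, E = fromRows 0 1 := ⟨_, rfl⟩
  obtain ⟨F, hF⟩ : ∃ F : Matrix (Fin n) (Fin n ⊕ Fin n) ℝ, F = fromCols (-a) dᵀ := ⟨_, rfl⟩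
  have h2 : fromBlocks 0 0 0 p * (fromBlocks a b d e)ᵀ * fromBlocks q 0 0 0 * fromBlocks a b d e
      = E * ((p * d * q) * F) := by
    rw [fromBlocks_transpose, fromBlocks_multiply, fromBlocks_multiply, fromBlocks_multiply,
      hE, hF, fromRows_mul, hd', hbd, Matrix.mul_fromCols]
    ext (i | i) (j | j) <;> simp
  have h4 : F * E = dᵀ := by
    rw [hE, hF, fromCols_mul_fromRows]; simp
  rw [h1, h2, specRadius_mul_comm_aux]
  have h3 : (p * d * q) * F * E = (p * d * q) * dᵀ := by
    rw [Matrix.mul_assoc _ F E, h4]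
  rw [h3, specRadius_mul_comm_aux (p * d * q)]
  simp only [Matrix.mul_assoc]
end
end

section
/- Let γ > 0. Let C₁ ∈ ℂ^{k×n} and C₂ ∈ ℂ^{l×n} and suppose, with respect to a decomposition ℂⁿ = ℂ^{p} ⊕ ℂ^{q}, the Hermitian matrix A_x := (1/2)C₁†C₁ − (1/2)C₂†C₂ is block diagonal: A_x = diag(A₁, A₃). Let D₁₂ ∈ ℂ^{k×k} and D₂₁ ∈ ℂ^{l×l} be unitary and set B₁ := −C₂†·D₂₁ and B₂ := −C₁†·D₁₂, partitioned conformally as B₁ = [B₁ₓ₁; B₁ₓ₂] and B₂ = [B₂ₓ₁; B₂ₓ₂]. Suppose Hermitian matrices S, T ∈ ℂ^{q×q} solve −A₃·S − S·A₃† + B₂ₓ₂·B₂ₓ₂† = 0 and −A₃·T − T·A₃† + B₁ₓ₂·B₁ₓ₂† = 0 with P := S − (1/γ²)T invertible, and Hermitian matrices U, V ∈ ℂ^{p×p} solve A₁·U + U·A₁† + B₁ₓ₁·B₁ₓ₁† = 0 and A₁·V + V·A₁† + B₂ₓ₁·B₂ₓ₁† = 0 with Q := U − (1/γ²)V invertible.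 Then, with A_y := −A_x: (a) X := diag(0, P^{−1}) solves A_x†·X + X·A_x + X·((1/γ²)B₁B₁† − B₂B₂†)·X = 0; (b) Y := (1/γ²)·diag(Q^{−1}, 0) solves A_y·Y + Y·A_y† + Y·(C₁†C₁ − γ²·C₂†C₂)·Y = 0; and (c) X·Y = 0, so the spectral radius ρ(X·Y) = 0 < 1. -/
open Matrix

noncomputable section

/-- The spectral radius of a complex square matrix: the supremum of the moduli
of its eigenvalues. -/
def specRadiusC {ι : Type*} [Fintype ι] [DecidableEq ι] (M : Matrix ι ι ℂ) : ℝ :=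
  sSup {x : ℝ | ∃ μ : ℂ, (M - μ • (1 : Matrix ι ι ℂ)).det = 0 ∧ x = ‖μ‖}

/-- the algebraic core of coherent feedback `H∞` control of
passive linear quantum systems.  With `A_x = ½C₁ᴴC₁ - ½C₂ᴴC₂ = diag(A₁, A₃)`,
`B₁ = -C₂ᴴD₂₁`, `B₂ = -C₁ᴴD₁₂` (with `D₁₂, D₂₁` unitary) partitioned
conformally, Hermitian solutions `S, T` and `U, V` of the indicated Lyapunov
equations with `P = S - (1/γ²)T` and `Q = U - (1/γ²)V` invertible give:
(a) `X = diag(0, P⁻¹)` solves the `X`-Riccati equation;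
(b) `Y = (1/γ²)·diag(Q⁻¹, 0)` solves the `Y`-Riccati equation (`A_y = -A_x`);
(c) `X·Y = 0`, so `ρ(X·Y) = 0 < 1`. -/
theorem passive_Hinfty_core
    (p q k l : ℕ) (hp : 0 < p) (hq : 0 < q) (hk : 0 < k) (hl : 0 < l)
    (γ : ℝ) (hγ : 0 < γ)
    (C₁ : Matrix (Fin k) (Fin p ⊕ Fin q) ℂ)
    (C₂ : Matrix (Fin l) (Fin p ⊕ Fin q) ℂ)
    (D₁₂ : Matrix (Fin k) (Fin k) ℂ) (hD₁₂ : D₁₂ ∈ Matrix.unitaryGroup (Fin k) ℂ)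
    (D₂₁ : Matrix (Fin l) (Fin l) ℂ) (hD₂₁ : D₂₁ ∈ Matrix.unitaryGroup (Fin l) ℂ)
    (Ax : Matrix (Fin p ⊕ Fin q) (Fin p ⊕ Fin q) ℂ)
    (hAx : Ax = (1 / 2 : ℂ) • (C₁ᴴ * C₁) - (1 / 2 : ℂ) • (C₂ᴴ * C₂))
    (A₁ : Matrix (Fin p) (Fin p) ℂ) (A₃ : Matrix (Fin q) (Fin q) ℂ)
    (hAxblk : Ax = Matrix.fromBlocks A₁ 0 0 A₃)
    (B₁ : Matrix (Fin p ⊕ Fin q) (Fin l) ℂ) (hB₁ : B₁ = -(C₂ᴴ * D₂₁))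
    (B₂ : Matrix (Fin p ⊕ Fin q) (Fin k) ℂ) (hB₂ : B₂ = -(C₁ᴴ * D₁₂))
    (B₁x₁ : Matrix (Fin p) (Fin l) ℂ) (B₁x₂ : Matrix (Fin q) (Fin l) ℂ)
    (hB₁blk : B₁ = Matrix.fromRows B₁x₁ B₁x₂)
    (B₂x₁ : Matrix (Fin p) (Fin k) ℂ) (B₂x₂ : Matrix (Fin q) (Fin k) ℂ)
    (hB₂blk : B₂ = Matrix.fromRows B₂x₁ B₂x₂)
    (S T : Matrix (Fin q) (Fin q) ℂ) (hSherm : Sᴴ = S) (hTherm : Tᴴ = T)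
    (hSlyap : -(A₃ * S) - S * A₃ᴴ + B₂x₂ * B₂x₂ᴴ = 0)
    (hTlyap : -(A₃ * T) - T * A₃ᴴ + B₁x₂ * B₁x₂ᴴ = 0)
    (P : Matrix (Fin q) (Fin q) ℂ) (hPdef : P = S - (1 / (γ : ℂ) ^ 2) • T)
    (hPinv : IsUnit P.det)
    (U V : Matrix (Fin p) (Fin p) ℂ) (hUherm : Uᴴ = U) (hVherm : Vᴴ = V)
    (hUlyap : A₁ * U + U * A₁ᴴ + B₁x₁ * B₁x₁ᴴ = 0)
    (hVlyap : A₁ * V + V * A₁ᴴ + B₂x₁ * B₂x₁ᴴ = 0)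
    (Q : Matrix (Fin p) (Fin p) ℂ) (hQdef : Q = U - (1 / (γ : ℂ) ^ 2) • V)
    (hQinv : IsUnit Q.det)
    (Ay : Matrix (Fin p ⊕ Fin q) (Fin p ⊕ Fin q) ℂ) (hAy : Ay = -Ax)
    (X : Matrix (Fin p ⊕ Fin q) (Fin p ⊕ Fin q) ℂ)
    (hX : X = Matrix.fromBlocks 0 0 0 P⁻¹)
    (Y : Matrix (Fin p ⊕ Fin q) (Fin p ⊕ Fin q) ℂ)
    (hY : Y = (1 / (γ : ℂ) ^ 2) • Matrix.fromBlocks Q⁻¹ 0 0 0) :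
    (Axᴴ * X + X * Ax
        + X * ((1 / (γ : ℂ) ^ 2) • (B₁ * B₁ᴴ) - B₂ * B₂ᴴ) * X = 0)
    ∧ (Ay * Y + Y * Ayᴴ
        + Y * (C₁ᴴ * C₁ - ((γ : ℂ) ^ 2) • (C₂ᴴ * C₂)) * Y = 0)
    ∧ (X * Y = 0 ∧ specRadiusC (X * Y) = 0 ∧ specRadiusC (X * Y) < 1) := by
  have hAh : Axᴴ = Ax := by
    rw [hAx]
    simp [conjTranspose_sub, conjTranspose_smul, conjTranspose_mul]
  have hA1 : A₁ᴴ = A₁ := by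
    rw [hAxblk, fromBlocks_conjTranspose] at hAh
    exact (fromBlocks_inj.1 hAh).1
  have hA3 : A₃ᴴ = A₃ := by
    rw [hAxblk, fromBlocks_conjTranspose] at hAh
    exact (fromBlocks_inj.1 hAh).2.2.2
  have hg : (γ : ℂ) ≠ 0 := by exact_mod_cast hγ.ne'
  have hC1 : C₁ᴴ * C₁ = B₂ * B₂ᴴ := by
    have h : D₁₂ * D₁₂ᴴ = 1 := mem_unitaryGroup_iff.1 hD₁₂
    rw [hB₂]
    simp only [conjTranspose_neg, conjTranspose_mul, conjTranspose_conjTranspose,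
      Matrix.neg_mul, Matrix.mul_neg, neg_neg]
    rw [Matrix.mul_assoc, ← Matrix.mul_assoc D₁₂, h, Matrix.one_mul]
  have hC2 : C₂ᴴ * C₂ = B₁ * B₁ᴴ := by
    have h : D₂₁ * D₂₁ᴴ = 1 := mem_unitaryGroup_iff.1 hD₂₁
    rw [hB₁]
    simp only [conjTranspose_neg, conjTranspose_mul, conjTranspose_conjTranspose,
      Matrix.neg_mul, Matrix.mul_neg, neg_neg]
    rw [Matrix.mul_assoc, ← Matrix.mul_assoc D₂₁, h, Matrix.one_mul]
  have hBB1 : B₁ * B₁ᴴ = fromBlocks (B₁x₁ * B₁x₁ᴴ) (B₁x₁ * B₁x₂ᴴ) (B₁x₂ * B₁x₁ᴴ)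
      (B₁x₂ * B₁x₂ᴴ) := by
    rw [hB₁blk, conjTranspose_fromRows_eq_fromCols_conjTranspose, fromRows_mul_fromCols]
  have hBB2 : B₂ * B₂ᴴ = fromBlocks (B₂x₁ * B₂x₁ᴴ) (B₂x₁ * B₂x₂ᴴ) (B₂x₂ * B₂x₁ᴴ)
      (B₂x₂ * B₂x₂ᴴ) := by
    rw [hB₂blk, conjTranspose_fromRows_eq_fromCols_conjTranspose, fromRows_mul_fromCols]
  have hXY : X * Y = 0 := by
    rw [hX, hY]; simp [fromBlocks_multiply]
  have hrad : specRadiusC (X * Y) = 0 := by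
    rw [hXY, specRadiusC]
    have : {x : ℝ | ∃ μ : ℂ, ((0 : Matrix (Fin p ⊕ Fin q) (Fin p ⊕ Fin q) ℂ)
        - μ • (1 : Matrix (Fin p ⊕ Fin q) (Fin p ⊕ Fin q) ℂ)).det = 0 ∧ x = ‖μ‖} ⊆ {0} := by
      rintro x ⟨μ, h, rfl⟩
      rw [zero_sub, ← neg_smul, det_smul, det_one, mul_one] at h
      have := eq_zero_of_pow_eq_zero h
      simpa using this
    rcases Set.subset_singleton_iff_eq.1 this with h | h <;> rw [h] <;> simp
  refine ⟨?_, ?_, hXY, hrad, by rw [hrad]; exact one_pos⟩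
  · have key : (1 / (γ : ℂ) ^ 2) • (B₁x₂ * B₁x₂ᴴ) - B₂x₂ * B₂x₂ᴴ = -(A₃ * P + P * A₃) := by
      rw [hA3] at hSlyap hTlyap
      have e1 : B₂x₂ * B₂x₂ᴴ = A₃ * S + S * A₃ := by
        rw [← sub_eq_zero, ← hSlyap]; abel
      have e2 : B₁x₂ * B₁x₂ᴴ = A₃ * T + T * A₃ := by
        rw [← sub_eq_zero, ← hTlyap]; abel
      rw [e1, e2, hPdef, Matrix.mul_sub, Matrix.sub_mul, Matrix.mul_smul, Matrix.smul_mul,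
        smul_add]
      abel
    have key2 : A₃ * P⁻¹ + P⁻¹ * A₃
        + P⁻¹ * ((1 / (γ : ℂ) ^ 2) • (B₁x₂ * B₁x₂ᴴ) - B₂x₂ * B₂x₂ᴴ) * P⁻¹ = 0 := by
      rw [key, Matrix.mul_neg, Matrix.neg_mul, Matrix.mul_add, Matrix.add_mul,
        ← Matrix.mul_assoc P⁻¹ P, nonsing_inv_mul P hPinv, Matrix.one_mul, ← Matrix.mul_assoc,
        Matrix.mul_assoc (P⁻¹ * A₃), mul_nonsing_inv P hPinv, Matrix.mul_one]
      abel
    rw [hAh, hBB1, hBB2, hAxblk, hX, fromBlocks_smul, sub_eq_add_neg, fromBlocks_neg,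
      fromBlocks_add, fromBlocks_multiply, fromBlocks_multiply, fromBlocks_multiply,
      fromBlocks_multiply, fromBlocks_add, fromBlocks_add, ← fromBlocks_zero, fromBlocks_inj]
    simp only [Matrix.zero_mul, Matrix.mul_zero, add_zero, zero_add, true_and]
    rw [← sub_eq_add_neg]
    exact key2
  · have key : (1 / (γ : ℂ) ^ 2) • (B₂x₁ * B₂x₁ᴴ - ((γ : ℂ) ^ 2) • (B₁x₁ * B₁x₁ᴴ))
        = A₁ * Q + Q * A₁ := by
      rw [hA1] at hUlyap hVlyap
      have e1 : B₁x₁ * B₁x₁ᴴ = -(A₁ * U + U * A₁) := eq_neg_of_add_eq_zero_right hUlyap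
      have e2 : B₂x₁ * B₂x₁ᴴ = -(A₁ * V + V * A₁) := eq_neg_of_add_eq_zero_right hVlyap
      rw [e1, e2, hQdef, Matrix.mul_sub, Matrix.sub_mul, Matrix.mul_smul, Matrix.smul_mul,
        smul_sub, smul_smul, one_div, inv_mul_cancel₀ (pow_ne_zero 2 hg), one_smul, smul_neg,
        smul_add]
      abel
    have key2 : -(A₁ * Q⁻¹) - Q⁻¹ * A₁ + Q⁻¹ * ((1 / (γ : ℂ) ^ 2) •
        (B₂x₁ * B₂x₁ᴴ - ((γ : ℂ) ^ 2) • (B₁x₁ * B₁x₁ᴴ))) * Q⁻¹ = 0 := by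
      rw [key, Matrix.mul_add, Matrix.add_mul,
        ← Matrix.mul_assoc Q⁻¹ Q, nonsing_inv_mul Q hQinv, Matrix.one_mul, ← Matrix.mul_assoc,
        Matrix.mul_assoc (Q⁻¹ * A₁), mul_nonsing_inv Q hQinv, Matrix.mul_one]
      abel
    have key3 : -Ax * fromBlocks Q⁻¹ 0 0 0 + fromBlocks Q⁻¹ 0 0 0 * -Ax
        + fromBlocks Q⁻¹ 0 0 0 * ((1 / (γ : ℂ) ^ 2) •
          (B₂ * B₂ᴴ - ((γ : ℂ) ^ 2) • (B₁ * B₁ᴴ))) * fromBlocks Q⁻¹ 0 0 0 = 0 := by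
      rw [hBB1, hBB2, hAxblk, fromBlocks_smul, sub_eq_add_neg, fromBlocks_neg, fromBlocks_neg,
        fromBlocks_add, fromBlocks_smul, fromBlocks_multiply, fromBlocks_multiply,
        fromBlocks_multiply,
        fromBlocks_multiply, fromBlocks_add, fromBlocks_add, ← fromBlocks_zero, fromBlocks_inj]
      simp only [Matrix.zero_mul, Matrix.mul_zero, add_zero, zero_add, and_true, neg_zero]
      rw [← sub_eq_add_neg, Matrix.neg_mul, Matrix.mul_neg, ← sub_eq_add_neg]
      exact key2
    rw [hAy, conjTranspose_neg, hAh, hC1, hC2, hY]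
    have := congrArg (fun M => (1 / (γ : ℂ) ^ 2) • M) key3
    simp only [smul_add, smul_zero] at this
    rw [← this]
    simp only [Matrix.mul_smul, Matrix.smul_mul]
end
end

section
/- Let 0 < κ₁ < κ₂ be real numbers. Define, for γ > √(κ₁/κ₂) (so that γ²κ₂ − κ₁ > 0), the controller parameters A_K(γ) := (κ₁ − κ₂)/2 − κ₂κ₁(1 − γ²)/(γ²κ₂ − κ₁), B_K := −√κ₁, and C_K(γ) := √κ₂ · κ₁(1 − γ²)/(γ²κ₂ − κ₁). Then there exists γ > √(κ₁/κ₂) such that the physical realizability condition 2·A_K(γ) + B_K² + C_K(γ)² = 0 holds; that is, the H∞ controller for the empty cavity can always be realized as a genuine quantum system without adding extra vacuum noise channels, at the cost of a disturbance attenuation level γ strictly larger than √(κ₁/κ₂). -/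
/-- for the empty-cavity `H∞` central controller with
`A_K(γ) = (κ₁ - κ₂)/2 - κ₂κ₁(1 - γ²)/(γ²κ₂ - κ₁)`, `B_K = -√κ₁` and
`C_K(γ) = √κ₂·κ₁(1 - γ²)/(γ²κ₂ - κ₁)`, there exists `γ > √(κ₁/κ₂)` such that
the physical realizability condition `2A_K(γ) + B_K² + C_K(γ)² = 0` holds. -/
theorem cavity_controller_physically_realizable
    (κ₁ κ₂ : ℝ) (h0 : 0 < κ₁) (h12 : κ₁ < κ₂) :
    ∃ γ : ℝ, Real.sqrt (κ₁ / κ₂) < γ ∧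
      2 * ((κ₁ - κ₂) / 2 - κ₂ * κ₁ * (1 - γ ^ 2) / (γ ^ 2 * κ₂ - κ₁))
        + (-Real.sqrt κ₁) ^ 2
        + (Real.sqrt κ₂ * (κ₁ * (1 - γ ^ 2) / (γ ^ 2 * κ₂ - κ₁))) ^ 2 = 0 := by
  have h2 : 0 < κ₂ := h0.trans h12
  have hd : 0 < κ₂ - κ₁ := sub_pos.mpr h12
  obtain ⟨x, hx0, hx⟩ : ∃ x : ℝ, 0 < x ∧ κ₂ * x ^ 2 - 2 * κ₂ * x + 2 * κ₁ - κ₂ = 0 := by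
    refine ⟨1 + Real.sqrt (2 * (κ₂ - κ₁) / κ₂), by positivity, ?_⟩
    have hs : Real.sqrt (2 * (κ₂ - κ₁) / κ₂) ^ 2 = 2 * (κ₂ - κ₁) / κ₂ :=
      Real.sq_sqrt (by positivity)
    have hs' : κ₂ * Real.sqrt (2 * (κ₂ - κ₁) / κ₂) ^ 2 = 2 * (κ₂ - κ₁) := by
      rw [hs]; field_simp
    linear_combination hs'
  have hD : 0 < x * κ₂ + κ₁ := by positivity
  refine ⟨Real.sqrt (κ₁ * (1 + x) / (x * κ₂ + κ₁)), ?_, ?_⟩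
  · apply Real.sqrt_lt_sqrt (by positivity)
    rw [div_lt_div_iff₀ h2 hD]
    nlinarith [mul_pos h0 hd]
  · have hg : Real.sqrt (κ₁ * (1 + x) / (x * κ₂ + κ₁)) ^ 2 = κ₁ * (1 + x) / (x * κ₂ + κ₁) :=
      Real.sq_sqrt (by positivity)
    rw [hg]
    have e1 : κ₁ * (1 + x) / (x * κ₂ + κ₁) * κ₂ - κ₁ = κ₁ * (κ₂ - κ₁) / (x * κ₂ + κ₁) := by
      field_simp; ring
    have e2 : 1 - κ₁ * (1 + x) / (x * κ₂ + κ₁) = x * (κ₂ - κ₁) / (x * κ₂ + κ₁) := by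
      field_simp; ring
    have e3 : κ₁ * (1 - κ₁ * (1 + x) / (x * κ₂ + κ₁)) /
        (κ₁ * (1 + x) / (x * κ₂ + κ₁) * κ₂ - κ₁) = x := by
      rw [e1, e2]
      have := hd.ne'
      field_simp
    rw [mul_assoc κ₂ κ₁, mul_div_assoc κ₂, e3, neg_sq, mul_pow, Real.sq_sqrt h0.le,
      Real.sq_sqrt h2.le]
    linear_combination hx
end
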